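/- Let T_t = e^{−tA} be a semigroup of self-adjoint unital completely positive maps on M_n(ℂ) with fixed point algebra N_fix and conditional expectation E onto N_fix, and f : (0,∞)→(0,∞) a C¹ convex function. Suppose there is λ > 0 such that the f-Fisher information satisfies I_A^f(T_t(ρ)) ≤ e^{−λt} I_A^f(ρ) for all positive definite ρ and t ≥ 0. Then d^f(T_t(ρ)‖E(ρ)) ≤ e^{−λt} d^f(ρ‖E(ρ)) for all positive definite ρ; in particular λ d^f(ρ‖E(ρ)) ≤ I_A^f(ρ). -/

import Mathlib

open Matrix
open scoped ComplexOrder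

/-- Bregman relative entropy `d^f(ρ‖σ) = tr(f(ρ) - f(σ) - (ρ - σ) f'(σ))`. -/
noncomputable def bregman {n : ℕ} (f f' : ℝ → ℝ) (ρ σ : Matrix (Fin n) (Fin n) ℂ) : ℂ :=
  Matrix.trace (cfc f ρ - cfc f σ - (ρ - σ) * cfc f' σ)

/-- The amplification `id_{M_k} ⊗ β` of a linear map on a matrix algebra. -/
def amplify {n : ℕ} (β : Matrix (Fin n) (Fin n) ℂ →ₗ[ℂ] Matrix (Fin n) (Fin n) ℂ) (k : ℕ)
    (x : Matrix (Fin k × Fin n) (Fin k × Fin n) ℂ) :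
    Matrix (Fin k × Fin n) (Fin k × Fin n) ℂ :=
  Matrix.of fun p q => β (Matrix.of fun a b => x (p.1, a) (q.1, b)) p.2 q.2

/-- A linear map on a matrix algebra is completely positive if all its amplifications
preserve positive semidefiniteness. -/
def IsCP {n : ℕ} (β : Matrix (Fin n) (Fin n) ℂ →ₗ[ℂ] Matrix (Fin n) (Fin n) ℂ) : Prop :=
  ∀ (k : ℕ) (x : Matrix (Fin k × Fin n) (Fin k × Fin n) ℂ), x.PosSemidef →
    (amplify β k x).PosSemidef

/-- The `f`-Fisher information `I_A^f(ρ) = tr(A(ρ) f'(ρ))` of a generator `A`. -/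
noncomputable def fisherInfo {n : ℕ} (A : Matrix (Fin n) (Fin n) ℂ →ₗ[ℂ] Matrix (Fin n) (Fin n) ℂ)
    (f' : ℝ → ℝ) (ρ : Matrix (Fin n) (Fin n) ℂ) : ℝ :=
  ((A ρ * cfc f' ρ).trace).re

/-!
Along the flow, Klein's inequality squeezes the difference quotient of `tr f(T_t ρ)` between traces
against `f'`, so `tr f` is differentiable with gradient `f'` and `d/dt tr f(T_t ρ) = -I(T_t ρ)`. In
the Bregman divergence to `E ρ` the first-order term vanishes: `f'(E ρ)` is again a fixed point of
the semigroup, hence `tr((ρ - E ρ) f'(E ρ)) = 0`. Thus `D(t) = d(T_t ρ ‖ E ρ)` satisfies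
`D' = -I` and, because `T_t ρ → E ρ`, tends to `0`. For fixed `h` the function
`t ↦ exp(-λh) D(t) - D(t + h)` is then nonincreasing with limit `0`, so it is nonnegative at
`t = 0`.

Writing `Re tr(β(g(x)) h(y))` as a sum of `g a * h b` over pairs of eigenvalues, with weights that
are nonnegative for positive `β`, reduces Klein's inequality, the contractivity of `β` and the
stability of its fixed points under functional calculus to statements about numbers.
-/

/-- A positive, unital and trace-preserving linear map on a matrix algebra: the noncommutative
analogue of a doubly stochastic matrix. -/
structure IsDoublyStochasticMap {n : Type*} [Fintype n] [DecidableEq n]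
    (β : Matrix n n ℂ →ₗ[ℂ] Matrix n n ℂ) : Prop where
  posSemidef_map : ∀ x, x.PosSemidef → (β x).PosSemidef
  map_one : β 1 = 1
  trace_map : ∀ x, (β x).trace = x.trace

section TraceForm

variable {n : Type*} [Fintype n] {x y : Matrix n n ℂ}

open scoped MatrixOrder in
theorem re_trace_mul_nonneg (hx : x.PosSemidef) (hy : y.PosSemidef) :
    0 ≤ (x * y).trace.re := by
  classical
  obtain ⟨c, rfl⟩ := CStarAlgebra.nonneg_iff_eq_star_mul_self.1 hx.nonneg
  rw [Matrix.mul_assoc, trace_mul_comm]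
  exact (Complex.le_def.1 (hy.mul_mul_conjTranspose_same c).trace_nonneg).1

theorem eq_zero_of_re_trace_mul_self_nonpos (hx : x.IsHermitian) (h : (x * x).trace.re ≤ 0) :
    x = 0 := by
  have nonneg := (posSemidef_conjTranspose_mul_self x).trace_nonneg
  rw [← trace_conjTranspose_mul_self_eq_zero_iff]
  refine le_antisymm (Complex.le_def.2 ⟨?_, (Complex.le_def.1 nonneg).2.symm⟩) nonneg
  rwa [hx.eq]

end TraceForm

section SpectralCoupling

variable {n : Type*} [Fintype n] [DecidableEq n]
  {β : Matrix n n ℂ →ₗ[ℂ] Matrix n n ℂ} {x y : Matrix n n ℂ}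

/-- The real spectrum of a matrix as a `Finset`, the index set of its spectral decomposition. -/
noncomputable def spectrumFinset (x : Matrix n n ℂ) : Finset ℝ :=
  (finite_real_spectrum (A := x)).toFinset

theorem mem_spectrumFinset {a : ℝ} : a ∈ spectrumFinset x ↔ a ∈ spectrum ℝ x :=
  Set.Finite.mem_toFinset _

theorem continuousOn_spectrum (g : ℝ → ℝ) (x : Matrix n n ℂ) : ContinuousOn g (spectrum ℝ x) :=
  finite_real_spectrum.continuousOn g

theorem cfc_pi_mul (g h : ℝ → ℝ) (x : Matrix n n ℂ) : cfc (g * h) x = cfc g x * cfc h x :=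
  cfc_mul g h x (continuousOn_spectrum g x) (continuousOn_spectrum h x)

/-- The projection onto the eigenspace of a Hermitian matrix `x` for the eigenvalue `a`
(zero if `a` is not an eigenvalue), as the functional calculus of an indicator function. -/
noncomputable def spectralProjection (x : Matrix n n ℂ) (a : ℝ) : Matrix n n ℂ :=
  cfc (Pi.single a 1 : ℝ → ℝ) x

open scoped MatrixOrder in
theorem spectralProjection_posSemidef (x : Matrix n n ℂ) (a : ℝ) :
    (spectralProjection x a).PosSemidef :=
  nonneg_iff_posSemidef.1 <| cfc_nonneg fun b _ =>
    (Pi.single_nonneg.2 zero_le_one : (0 : ℝ → ℝ) ≤ Pi.single a 1) b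

theorem cfc_eq_sum_spectralProjection (g : ℝ → ℝ) (x : Matrix n n ℂ) :
    cfc g x = ∑ a ∈ spectrumFinset x, g a • spectralProjection x a := by
  have expand : (spectrum ℝ x).EqOn g
      (∑ a ∈ spectrumFinset x, fun b => g a • (Pi.single a 1 : ℝ → ℝ) b) := fun b hb => by
    simp [Finset.sum_apply, Pi.single_apply, mem_spectrumFinset, hb]
  rw [cfc_congr expand, cfc_sum _ _ _ fun a _ => continuousOn_spectrum _ x]
  exact Finset.sum_congr rfl fun a _ => cfc_smul _ _ x (continuousOn_spectrum _ x)

/-- The weights `Re tr(β(1_{x = a}) 1_{y = b})`, with which `Re tr(β(g(x)) h(y))` becomes a sum of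
`g a * h b` over pairs of eigenvalues. For positive `β` they form a (not normalised) coupling of the
spectra of `x` and `y`. -/
noncomputable def spectralCoupling (β : Matrix n n ℂ →ₗ[ℂ] Matrix n n ℂ) (x y : Matrix n n ℂ)
    (a b : ℝ) : ℝ :=
  (β (spectralProjection x a) * spectralProjection y b).trace.re

theorem spectralCoupling_nonneg (hβ : ∀ z, z.PosSemidef → (β z).PosSemidef) (x y : Matrix n n ℂ)
    (a b : ℝ) : 0 ≤ spectralCoupling β x y a b :=
  re_trace_mul_nonneg (hβ _ (spectralProjection_posSemidef x a)) (spectralProjection_posSemidef y b)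

theorem re_trace_map_cfc_mul_cfc (β : Matrix n n ℂ →ₗ[ℂ] Matrix n n ℂ) (x y : Matrix n n ℂ)
    (g h : ℝ → ℝ) :
    (β (cfc g x) * cfc h y).trace.re = ∑ a ∈ spectrumFinset x, ∑ b ∈ spectrumFinset y,
      spectralCoupling β x y a b * (g a * h b) := by
  rw [cfc_eq_sum_spectralProjection g x, cfc_eq_sum_spectralProjection h y, map_sum,
    Finset.sum_mul_sum, trace_sum, Complex.re_sum]
  refine Finset.sum_congr rfl fun a _ => ?_
  rw [trace_sum, Complex.re_sum]
  refine Finset.sum_congr rfl fun b _ => ?_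
  rw [LinearMap.map_smul_of_tower, smul_mul_smul_comm, trace_smul, Complex.smul_re, smul_eq_mul,
    spectralCoupling, mul_comm]

theorem sub_mul_deriv_le_sub {f f' : ℝ → ℝ} {D : Set ℝ} (hf : ConvexOn ℝ D f)
    (hf' : ∀ u ∈ D, HasDerivAt f (f' u) u) {a b : ℝ} (ha : a ∈ D) (hb : b ∈ D) :
    (a - b) * f' b ≤ f a - f b := by
  rcases lt_trichotomy a b with hab | rfl | hab
  · have := hf.slope_le_of_hasDerivAt ha hb hab (hf' b hb)
    rw [slope_def_field, div_le_iff₀ (by linarith)] at this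
    linarith
  · simp
  · have := hf.le_slope_of_hasDerivAt hb ha hab (hf' b hb)
    rwa [slope_def_field, le_div_iff₀' (by linarith)] at this

theorem klein_inequality {f f' : ℝ → ℝ} {D : Set ℝ} (hf : ConvexOn ℝ D f)
    (hf' : ∀ u ∈ D, HasDerivAt f (f' u) u) (hx : x.IsHermitian) (hxD : spectrum ℝ x ⊆ D)
    (hy : y.IsHermitian) (hyD : spectrum ℝ y ⊆ D) :
    ((x - y) * cfc f' y).trace.re ≤ (cfc f x).trace.re - (cfc f y).trace.re := by
  have expand := re_trace_map_cfc_mul_cfc LinearMap.id x y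
  simp only [LinearMap.id_apply] at expand
  have trace_x := expand f 1
  have trace_y := expand 1 f
  have cross := expand id f'
  have diag := expand 1 (id * f')
  rw [cfc_pi_mul] at diag
  simp only [cfc_one ℝ x hx.isSelfAdjoint, cfc_one ℝ y hy.isSelfAdjoint, mul_one, one_mul,
    cfc_id ℝ x hx.isSelfAdjoint, cfc_id ℝ y hy.isSelfAdjoint] at trace_x trace_y cross diag
  rw [sub_mul, trace_sub, Complex.sub_re, cross, diag, trace_x, trace_y]
  simp only [← Finset.sum_sub_distrib, ← mul_sub]
  refine Finset.sum_le_sum fun a ha => Finset.sum_le_sum fun b hb =>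
    mul_le_mul_of_nonneg_left ?_ (spectralCoupling_nonneg (fun _ h => h) x y a b)
  have := sub_mul_deriv_le_sub hf hf' (hxD (mem_spectrumFinset.1 ha))
    (hyD (mem_spectrumFinset.1 hb))
  simp only [Pi.one_apply, Pi.mul_apply, id]
  linarith

namespace IsDoublyStochasticMap

theorem sum_spectralCoupling_mul_sub_sq (hβ : IsDoublyStochasticMap β) (hx : x.IsHermitian)
    (hy : y.IsHermitian) (g h : ℝ → ℝ) :
    ∑ a ∈ spectrumFinset x, ∑ b ∈ spectrumFinset y,
        spectralCoupling β x y a b * (g a - h b) ^ 2 =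
      (cfc g x * cfc g x).trace.re + (cfc h y * cfc h y).trace.re
        - 2 * (β (cfc g x) * cfc h y).trace.re := by
  have expand := re_trace_map_cfc_mul_cfc β x y
  have left := expand (g * g) 1
  have right := expand 1 (h * h)
  rw [cfc_one ℝ y hy.isSelfAdjoint, mul_one, hβ.trace_map, cfc_pi_mul] at left
  rw [cfc_one ℝ x hx.isSelfAdjoint, hβ.map_one, one_mul, cfc_pi_mul] at right
  rw [left, right, expand, Finset.mul_sum, ← Finset.sum_add_distrib, ← Finset.sum_sub_distrib]
  refine Finset.sum_congr rfl fun a _ => ?_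
  rw [Finset.mul_sum, ← Finset.sum_add_distrib, ← Finset.sum_sub_distrib]
  refine Finset.sum_congr rfl fun b _ => ?_
  simp only [Pi.mul_apply, Pi.one_apply]
  ring

theorem two_mul_re_trace_map_mul_le (hβ : IsDoublyStochasticMap β) (hx : x.IsHermitian)
    (hy : y.IsHermitian) :
    2 * (β x * y).trace.re ≤ (x * x).trace.re + (y * y).trace.re := by
  have quad := hβ.sum_spectralCoupling_mul_sub_sq hx hy id id
  have : 0 ≤ ∑ a ∈ spectrumFinset x, ∑ b ∈ spectrumFinset y,
      spectralCoupling β x y a b * (a - b) ^ 2 :=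
    Finset.sum_nonneg fun a _ => Finset.sum_nonneg fun b _ =>
      mul_nonneg (spectralCoupling_nonneg hβ.posSemidef_map x y a b) (sq_nonneg _)
  rw [cfc_id ℝ x hx.isSelfAdjoint, cfc_id ℝ y hy.isSelfAdjoint] at quad
  simp only [id] at quad
  linarith

theorem isHermitian_map (hβ : IsDoublyStochasticMap β) (hx : x.IsHermitian) :
    (β x).IsHermitian := by
  rw [← cfc_id ℝ x hx.isSelfAdjoint, cfc_eq_sum_spectralProjection, map_sum]
  refine isSelfAdjoint_sum _ fun a _ => ?_
  rw [LinearMap.map_smul_of_tower]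
  exact (IsSelfAdjoint.all a).smul
    (hβ.posSemidef_map _ (spectralProjection_posSemidef x a)).isHermitian

theorem re_trace_map_mul_map_le (hβ : IsDoublyStochasticMap β) (hx : x.IsHermitian) :
    (β x * β x).trace.re ≤ (x * x).trace.re := by
  linarith [hβ.two_mul_re_trace_map_mul_le hx (hβ.isHermitian_map hx)]

theorem re_trace_map_cfc_mul_self (hβ : IsDoublyStochasticMap β) (hx : x.IsHermitian)
    (hfix : β x = x) (g : ℝ → ℝ) :
    (β (cfc g x) * cfc g x).trace.re = (cfc g x * cfc g x).trace.re := by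
  have nonneg := spectralCoupling_nonneg hβ.posSemidef_map x x
  have quad_id := hβ.sum_spectralCoupling_mul_sub_sq hx hx id id
  have quad_g := hβ.sum_spectralCoupling_mul_sub_sq hx hx g g
  rw [cfc_id ℝ x hx.isSelfAdjoint, hfix, ← two_mul, sub_self, Finset.sum_eq_zero_iff_of_nonneg
    fun a _ => Finset.sum_nonneg fun b _ => mul_nonneg (nonneg a b) (sq_nonneg _)] at quad_id
  have vanish : ∀ a ∈ spectrumFinset x, ∀ b ∈ spectrumFinset x,
      spectralCoupling β x x a b * (g a - g b) ^ 2 = 0 := fun a ha b hb => by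
    have := (Finset.sum_eq_zero_iff_of_nonneg fun b _ =>
      mul_nonneg (nonneg a b) (sq_nonneg _)).1 (quad_id a ha) b hb
    rcases mul_eq_zero.1 this with hw | hab
    · rw [hw, zero_mul]
    · obtain rfl : a = b := sub_eq_zero.1 (pow_eq_zero_iff two_ne_zero |>.1 hab)
      rw [sub_self, zero_pow two_ne_zero, mul_zero]
  rw [Finset.sum_eq_zero fun a ha => Finset.sum_eq_zero (vanish a ha)] at quad_g
  linarith

theorem map_cfc_of_fixed (hβ : IsDoublyStochasticMap β) (hx : x.IsHermitian) (hfix : β x = x)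
    (g : ℝ → ℝ) : β (cfc g x) = cfc g x := by
  have hg : (cfc g x).IsHermitian := cfc_predicate g x
  have hdiff : (β (cfc g x) - cfc g x).IsHermitian := (hβ.isHermitian_map hg).sub hg
  have inner := hβ.re_trace_map_cfc_mul_self hx hfix g
  have contraction := hβ.re_trace_map_mul_map_le hg
  refine sub_eq_zero.1 (eq_zero_of_re_trace_mul_self_nonpos hdiff ?_)
  rw [sub_mul, mul_sub, mul_sub, trace_sub, trace_sub, trace_sub, trace_mul_comm (cfc g x)]
  simp only [Complex.sub_re]
  linarith

end IsDoublyStochasticMap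

end SpectralCoupling

section TraceFunction

open Filter Topology

variable {n : Type*} [Fintype n] [DecidableEq n]

/-- The real-linear functional `x ↦ Re tr(x a)`; the gradient of `x ↦ Re tr f(x)` at `x₀` has this
form with `a = f'(x₀)`. -/
noncomputable def reTraceMul (a : Matrix n n ℂ) : Matrix n n ℂ →L[ℝ] ℝ :=
  LinearMap.toContinuousLinearMap
    (Complex.reLm ∘ₗ traceLinearMap n ℝ ℂ ∘ₗ LinearMap.mulRight ℝ a)

theorem reTraceMul_apply (a x : Matrix n n ℂ) : reTraceMul a x = (x * a).trace.re := rfl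

/-- The Hermitian matrices with spectrum in `D`, the domain on which `cfc f` is meaningful for a
function `f` on `D`. -/
def hermitianWithSpectrumIn (n : Type*) [Fintype n] [DecidableEq n] (D : Set ℝ) :
    Set (Matrix n n ℂ) :=
  {x | x.IsHermitian ∧ spectrum ℝ x ⊆ D}

variable {f f' : ℝ → ℝ} {D : Set ℝ} {x : Matrix n n ℂ}

open scoped Matrix.Norms.L2Operator in
theorem continuousOn_cfc_hermitianWithSpectrumIn {g : ℝ → ℝ} (hD : IsOpen D)
    (hg : ContinuousOn g D) : ContinuousOn (cfc g) (hermitianWithSpectrumIn n D) :=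
  continuousOn_id.cfc_of_mem_nhdsSet g (hD.mem_nhdsSet.2 (Set.iUnion₂_subset fun _ hx => hx.2))
    (fun _ hx => hx.1) hg

theorem abs_re_trace_cfc_sub_le (hf : ConvexOn ℝ D f) (hf' : ∀ u ∈ D, HasDerivAt f (f' u) u)
    {y : Matrix n n ℂ} (hx : x ∈ hermitianWithSpectrumIn n D)
    (hy : y ∈ hermitianWithSpectrumIn n D) :
    |(cfc f y).trace.re - (cfc f x).trace.re - ((y - x) * cfc f' x).trace.re| ≤
      |((y - x) * (cfc f' y - cfc f' x)).trace.re| := by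
  have lower := klein_inequality hf hf' hy.1 hy.2 hx.1 hx.2
  have upper := klein_inequality hf hf' hx.1 hx.2 hy.1 hy.2
  rw [abs_of_nonneg (sub_nonneg.2 lower)]
  refine le_trans ?_ (le_abs_self _)
  rw [← neg_sub y x, neg_mul, trace_neg, Complex.neg_re] at upper
  rw [mul_sub, trace_sub, Complex.sub_re]
  linarith

open scoped Matrix.Norms.L2Operator in
theorem hasFDerivWithinAt_re_trace_cfc (hD : IsOpen D) (hf : ConvexOn ℝ D f)
    (hf' : ∀ u ∈ D, HasDerivAt f (f' u) u) (hf'_cont : ContinuousOn f' D)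
    (hx : x ∈ hermitianWithSpectrumIn n D) :
    HasFDerivWithinAt (fun y => (cfc f y).trace.re) (reTraceMul (cfc f' x))
      (hermitianWithSpectrumIn n D) x := by
  have gradient_increment : (fun y => cfc f' y - cfc f' x)
      =o[𝓝[hermitianWithSpectrumIn n D] x] fun _ => (1 : ℝ) := by
    rw [Asymptotics.isLittleO_one_iff, tendsto_sub_nhds_zero_iff]
    exact continuousOn_cfc_hermitianWithSpectrumIn hD hf'_cont x hx
  have product_isLittleO : (fun y => (y - x) * (cfc f' y - cfc f' x))
      =o[𝓝[hermitianWithSpectrumIn n D] x] fun y => y - x := by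
    refine Asymptotics.IsBigO.trans_isLittleO
      (g := fun y => ‖y - x‖ * ‖cfc f' y - cfc f' x‖) (.of_bound' ?_) ?_
    · exact .of_forall fun y => (norm_mul_le _ _).trans (le_abs_self _)
    · simpa only [mul_one, Asymptotics.isLittleO_norm_right] using
        (Asymptotics.isBigO_refl (fun y => ‖y - x‖) _).mul_isLittleO gradient_increment.norm_left
  refine .of_isLittleO <| Asymptotics.IsBigO.trans_isLittleO (.of_bound' ?_)
    (((reTraceMul 1).isBigO_comp _ _).trans_isLittleO product_isLittleO)
  filter_upwards [self_mem_nhdsWithin] with y hy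
  simpa only [reTraceMul_apply, mul_one, Real.norm_eq_abs]
    using abs_re_trace_cfc_sub_le hf hf' hx hy

end TraceFunction

section Convergence

open Filter Topology
open scoped NNReal InnerProductSpace

theorem exists_tendsto_of_re_inner_eq_of_antitone {𝕜 H : Type*} [RCLike 𝕜] [NormedAddCommGroup H]
    [InnerProductSpace 𝕜 H] [CompleteSpace H] {u : ℝ≥0 → H} {h : ℝ≥0 → ℝ} (h_anti : Antitone h)
    (hu : ∀ s t, RCLike.re ⟪u s, u t⟫_𝕜 = h (s + t)) : ∃ p, Tendsto u atTop (𝓝 p) := by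
  have norm_sq (t : ℝ≥0) : ‖u t‖ ^ 2 = h (2 * t) := by
    rw [norm_sq_eq_re_inner (𝕜 := 𝕜), hu, two_mul]
  have h_nonneg (t : ℝ≥0) : 0 ≤ h t := by
    have := norm_sq (t / 2)
    rw [mul_div_cancel₀ t two_ne_zero] at this
    exact this ▸ sq_nonneg _
  have h_bdd : BddBelow (Set.range h) := ⟨0, Set.forall_mem_range.2 h_nonneg⟩
  have h_lim : Tendsto (fun t => h (2 * t) - ⨅ s, h s) atTop (𝓝 0) :=
    tendsto_sub_nhds_zero_iff.2 <| (tendsto_atTop_ciInf h_anti h_bdd).comp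
      (tendsto_id.const_mul_atTop' two_pos)
  refine cauchySeq_tendsto_of_complete <| cauchySeq_of_le_tendsto_0'
    (fun t => √(h (2 * t) - ⨅ s, h s)) (fun s t hst => Real.le_sqrt_of_sq_le ?_)
    (by simpa only [Real.sqrt_zero] using h_lim.sqrt)
  calc dist (u s) (u t) ^ 2 = h (2 * s) - 2 * h (s + t) + h (2 * t) := by
        rw [dist_eq_norm, norm_sub_sq (𝕜 := 𝕜), hu, norm_sq, norm_sq]
    _ ≤ h (2 * s) - h (s + t) := by
        linarith [h_anti (show s + t ≤ 2 * t by rw [two_mul]; gcongr)]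
    _ ≤ h (2 * s) - ⨅ s, h s := by gcongr; exact ciInf_le h_bdd _

end Convergence

section SymmetricMarkovSemigroup

open Filter Topology

variable {n : Type*} [Fintype n] [DecidableEq n]

/-- A semigroup `T_t`, `t ≥ 0`, of positive unital maps on a matrix algebra that are self-adjoint
for the trace inner product `⟪x, y⟫ = tr(x* y)`. The values `T t` for `t < 0` are irrelevant. -/
structure IsSymmetricMarkovSemigroup (T : ℝ → (Matrix n n ℂ →ₗ[ℂ] Matrix n n ℂ)) : Prop where
  zero_eq_id : T 0 = LinearMap.id
  add_apply : ∀ s t, 0 ≤ s → 0 ≤ t → ∀ x, T (s + t) x = T s (T t x)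
  posSemidef_map : ∀ t, 0 ≤ t → ∀ x, x.PosSemidef → (T t x).PosSemidef
  map_one : ∀ t, 0 ≤ t → T t 1 = 1
  trace_star_map_mul : ∀ t, 0 ≤ t → ∀ x y, (star (T t x) * y).trace = (star x * T t y).trace

/-- `E` is invariant under the semigroup `T` and is the identity on the fixed points of `T`. For a
symmetric Markov semigroup this determines `E` as the conditional expectation onto the fixed point
algebra. -/
structure IsFixedPointExpectation (T : ℝ → (Matrix n n ℂ →ₗ[ℂ] Matrix n n ℂ))
    (E : Matrix n n ℂ →ₗ[ℂ] Matrix n n ℂ) : Prop where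
  apply_map : ∀ t, 0 ≤ t → ∀ x, E (T t x) = E x
  apply_of_fixed : ∀ x, (∀ t, 0 ≤ t → T t x = x) → E x = x

variable {T : ℝ → (Matrix n n ℂ →ₗ[ℂ] Matrix n n ℂ)} {E : Matrix n n ℂ →ₗ[ℂ] Matrix n n ℂ}
  {x y : Matrix n n ℂ}

namespace IsSymmetricMarkovSemigroup

theorem isDoublyStochasticMap (hT : IsSymmetricMarkovSemigroup T) {t : ℝ} (ht : 0 ≤ t) :
    IsDoublyStochasticMap (T t) where
  posSemidef_map := hT.posSemidef_map t ht
  map_one := hT.map_one t ht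
  trace_map x := by simpa [hT.map_one t ht] using (hT.trace_star_map_mul t ht 1 x).symm

theorem trace_star_map_mul_map (hT : IsSymmetricMarkovSemigroup T) {s t : ℝ} (hs : 0 ≤ s)
    (ht : 0 ≤ t) (x : Matrix n n ℂ) :
    (star (T s x) * T t x).trace = (star x * T (s + t) x).trace := by
  rw [hT.trace_star_map_mul s hs, hT.add_apply s t hs ht]

theorem antitoneOn_re_trace_star_mul_map (hT : IsSymmetricMarkovSemigroup T) (hx : x.IsHermitian) :
    AntitoneOn (fun t => (star x * T t x).trace.re) (Set.Ici 0) := by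
  intro s (hs : 0 ≤ s) t _ hst
  have halves (r : ℝ) (hr : 0 ≤ r / 2) :
      (star x * T r x).trace.re = (T (r / 2) x * T (r / 2) x).trace.re := by
    have := hT.trace_star_map_mul_map hr hr x
    rw [add_halves, star_eq_conjTranspose, ((hT.isDoublyStochasticMap hr).isHermitian_map hx).eq]
      at this
    rw [this]
  have hs2 : 0 ≤ s / 2 := by positivity
  have gap : 0 ≤ (t - s) / 2 := by linarith
  have ht2 : 0 ≤ t / 2 := by linarith
  have split : T (t / 2) x = T ((t - s) / 2) (T (s / 2) x) := by
    rw [← hT.add_apply _ _ gap hs2]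
    ring_nf
  simp only [halves s hs2, halves t ht2, split]
  exact (hT.isDoublyStochasticMap gap).re_trace_map_mul_map_le
    ((hT.isDoublyStochasticMap hs2).isHermitian_map hx)

open scoped NNReal in
theorem exists_tendsto (hT : IsSymmetricMarkovSemigroup T) (hx : x.IsHermitian) :
    ∃ p, Tendsto (fun t => T t x) atTop (𝓝 p) := by
  obtain ⟨p, hp⟩ := exists_tendsto_of_re_inner_eq_of_antitone (𝕜 := ℂ)
    (u := fun t : ℝ≥0 => WithLp.toLp 2 (vec (T t x)))
    (h := fun t => (star x * T t x).trace.re)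
    (fun s t hst => hT.antitoneOn_re_trace_star_mul_map hx s.coe_nonneg t.coe_nonneg hst)
    (fun s t => by
      have := hT.trace_star_map_mul_map s.coe_nonneg t.coe_nonneg x
      rw [star_eq_conjTranspose (T s x), ← star_vec_dotProduct_vec, dotProduct_comm] at this
      exact congrArg Complex.re this)
  refine ⟨of fun i j => p (j, i), ?_⟩
  rw [← NNReal.map_coe_atTop, tendsto_map'_iff]
  exact tendsto_pi_nhds.2 fun i => tendsto_pi_nhds.2 fun j =>
    ((EuclideanSpace.proj (𝕜 := ℂ) (j, i)).continuous.tendsto p).comp hp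

theorem map_limit (hT : IsSymmetricMarkovSemigroup T) {p : Matrix n n ℂ}
    (hp : Tendsto (fun t => T t x) atTop (𝓝 p)) {s : ℝ} (hs : 0 ≤ s) : T s p = p := by
  refine tendsto_nhds_unique
    (((T s).continuous_of_finiteDimensional.tendsto p).comp hp) ?_
  refine (hp.comp (tendsto_atTop_add_const_left _ s tendsto_id)).congr' ?_
  filter_upwards [eventually_ge_atTop 0] with t ht using hT.add_apply s t hs ht x

theorem tendsto_expectation (hT : IsSymmetricMarkovSemigroup T) (hE : IsFixedPointExpectation T E)
    (hx : x.IsHermitian) : Tendsto (fun t => T t x) atTop (𝓝 (E x)) := by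
  obtain ⟨p, hp⟩ := hT.exists_tendsto hx
  have E_tendsto : Tendsto (fun t => E (T t x)) atTop (𝓝 (E p)) :=
    (E.continuous_of_finiteDimensional.tendsto p).comp hp
  have E_const : Tendsto (fun t => E (T t x)) atTop (𝓝 (E x)) :=
    tendsto_const_nhds.congr' <| (eventually_ge_atTop 0).mono fun t ht => (hE.apply_map t ht x).symm
  rwa [tendsto_nhds_unique E_const E_tendsto, hE.apply_of_fixed p fun s hs => hT.map_limit hp hs]

theorem map_expectation (hT : IsSymmetricMarkovSemigroup T) (hE : IsFixedPointExpectation T E)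
    (hx : x.IsHermitian) {t : ℝ} (ht : 0 ≤ t) : T t (E x) = E x :=
  hT.map_limit (hT.tendsto_expectation hE hx) ht

theorem re_trace_expectation_mul (hT : IsSymmetricMarkovSemigroup T)
    (hE : IsFixedPointExpectation T E) (hx : x.IsHermitian)
    (hy : ∀ t, 0 ≤ t → T t y = y) : (E x * y).trace.re = (x * y).trace.re := by
  refine tendsto_nhds_unique (((reTraceMul y).continuous.tendsto _).comp
    (hT.tendsto_expectation hE hx)) (tendsto_const_nhds.congr' ?_)
  filter_upwards [eventually_ge_atTop 0] with t ht
  have := hT.trace_star_map_mul t ht x y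
  rw [hy t ht, star_eq_conjTranspose, star_eq_conjTranspose, hx.eq,
    ((hT.isDoublyStochasticMap ht).isHermitian_map hx).eq] at this
  rw [Function.comp_apply, reTraceMul_apply, this]

end IsSymmetricMarkovSemigroup

end SymmetricMarkovSemigroup

section Positivity

open Filter
open scoped Topology Matrix.Norms.L2Operator MatrixOrder

variable {n : Type*} [Fintype n] [DecidableEq n]
  {T : ℝ → (Matrix n n ℂ →ₗ[ℂ] Matrix n n ℂ)} {β E : Matrix n n ℂ →ₗ[ℂ] Matrix n n ℂ}
  {x : Matrix n n ℂ}

theorem posDef_iff_exists_algebraMap_le :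
    x.PosDef ↔ ∃ c : ℝ, 0 < c ∧ algebraMap ℝ (Matrix n n ℂ) c ≤ x := by
  rw [← isStrictlyPositive_iff_posDef]
  constructor
  · intro hx
    cases subsingleton_or_nontrivial (Matrix n n ℂ)
    · exact ⟨1, one_pos, (Subsingleton.elim _ _).le⟩
    · exact (CFC.exists_pos_algebraMap_le_iff hx.isSelfAdjoint).2 fun _ => hx.spectrum_pos
  · rintro ⟨c, hc, hcx⟩
    exact (isStrictlyPositive_algebraMap hc).of_le hcx

theorem IsDoublyStochasticMap.algebraMap_le_map (hβ : IsDoublyStochasticMap β) {c : ℝ}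
    (hx : algebraMap ℝ (Matrix n n ℂ) c ≤ x) : algebraMap ℝ (Matrix n n ℂ) c ≤ β x := by
  have := hβ.posSemidef_map _ (le_iff.1 hx)
  rwa [map_sub, Algebra.algebraMap_eq_smul_one, LinearMap.map_smul_of_tower, hβ.map_one,
    ← Algebra.algebraMap_eq_smul_one, ← le_iff] at this

theorem IsDoublyStochasticMap.posDef_map (hβ : IsDoublyStochasticMap β) (hx : x.PosDef) :
    (β x).PosDef := by
  obtain ⟨c, hc, hcx⟩ := posDef_iff_exists_algebraMap_le.1 hx
  exact posDef_iff_exists_algebraMap_le.2 ⟨c, hc, hβ.algebraMap_le_map hcx⟩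

theorem IsSymmetricMarkovSemigroup.expectation_posDef (hT : IsSymmetricMarkovSemigroup T)
    (hE : IsFixedPointExpectation T E) (hx : x.PosDef) : (E x).PosDef := by
  obtain ⟨c, hc, hcx⟩ := posDef_iff_exists_algebraMap_le.1 hx
  refine posDef_iff_exists_algebraMap_le.2 ⟨c, hc,
    ge_of_tendsto (hT.tendsto_expectation hE hx.isHermitian) ?_⟩
  filter_upwards [eventually_ge_atTop 0] with t ht
    using (hT.isDoublyStochasticMap ht).algebraMap_le_map hcx

theorem mem_hermitianWithSpectrumIn_Ioi (hx : x.PosDef) :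
    x ∈ hermitianWithSpectrumIn n (Set.Ioi 0) :=
  ⟨hx.isHermitian, fun _ hc => (isStrictlyPositive_iff_posDef.2 hx).spectrum_pos hc⟩

end Positivity

section ExponentialDecay

open Filter Topology

theorem le_mul_of_neg_deriv_shift_le {D J : ℝ → ℝ} {c t : ℝ}
    (hD : ∀ s, 0 ≤ s → HasDerivWithinAt D (-J s) (Set.Ici 0) s)
    (hD_lim : Tendsto D atTop (𝓝 0)) (ht : 0 ≤ t) (hJ : ∀ s, 0 ≤ s → J (t + s) ≤ c * J s) :
    D t ≤ c * D 0 := by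
  let gap : ℝ → ℝ := fun s => c * D s - D (t + s)
  have maps : Set.MapsTo (fun s => t + s) (Set.Ici 0) (Set.Ici 0) := fun s hs => add_nonneg ht hs
  have gap_deriv : ∀ s, 0 ≤ s →
      HasDerivWithinAt gap (c * -J s - -J (t + s)) (Set.Ici 0) s := fun s hs => by
    have shift := (hD (t + s) (add_nonneg ht hs)).comp s
      ((hasDerivWithinAt_id s _).const_add t) maps
    rw [mul_one] at shift
    exact ((hD s hs).const_mul c).sub shift
  have gap_anti : AntitoneOn gap (Set.Ici 0) := by
    refine antitoneOn_of_hasDerivWithinAt_nonpos (convex_Ici 0)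
      (fun s hs => (gap_deriv s hs).continuousWithinAt)
      (fun s hs => (gap_deriv s (interior_subset hs)).mono interior_subset) fun s hs => ?_
    linarith [hJ s (interior_subset hs)]
  have gap_lim : Tendsto gap atTop (𝓝 0) := by
    have shift_lim : Tendsto (fun s => D (t + s)) atTop (𝓝 0) :=
      hD_lim.comp (tendsto_atTop_add_const_left _ t tendsto_id)
    simpa only [mul_zero, sub_zero] using (hD_lim.const_mul c).sub shift_lim
  have gap_zero_nonneg : 0 ≤ gap 0 := by
    refine le_of_tendsto gap_lim ?_
    filter_upwards [eventually_ge_atTop 0] with s hs using gap_anti Set.self_mem_Ici hs hs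
  simpa only [gap, add_zero, sub_nonneg] using gap_zero_nonneg

theorem deriv_le_neg_mul_of_le_exp_neg_mul {D : ℝ → ℝ} {lam d : ℝ}
    (hD : HasDerivWithinAt D d (Set.Ici 0) 0)
    (hdecay : ∀ t, 0 ≤ t → D t ≤ Real.exp (-lam * t) * D 0) : d ≤ -lam * D 0 := by
  have bound_deriv : HasDerivWithinAt (fun t => Real.exp (-lam * t) * D 0) (-lam * D 0)
      (Set.Ici 0) 0 := by
    simpa using (((hasDerivAt_id (0 : ℝ)).const_mul (-lam)).exp.mul_const (D 0)).hasDerivWithinAt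
  have slopes {F : ℝ → ℝ} {F' : ℝ} (hF : HasDerivWithinAt F F' (Set.Ici 0) 0) :
      Tendsto (slope F 0) (𝓝[>] 0) (𝓝 F') :=
    (hasDerivWithinAt_iff_tendsto_slope' Set.self_notMem_Ioi).1 hF.Ioi_of_Ici
  refine le_of_tendsto_of_tendsto (slopes hD) (slopes bound_deriv) ?_
  filter_upwards [self_mem_nhdsWithin] with t (ht : 0 < t)
  simp only [slope_def_field, mul_zero, Real.exp_zero, one_mul]
  gcongr
  exact hdecay t ht.le

end ExponentialDecay

section EntropyProduction

open Filter Topology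

variable {n : ℕ} {T : ℝ → (Matrix (Fin n) (Fin n) ℂ →ₗ[ℂ] Matrix (Fin n) (Fin n) ℂ)}
  {A E : Matrix (Fin n) (Fin n) ℂ →ₗ[ℂ] Matrix (Fin n) (Fin n) ℂ}
  {ρ : Matrix (Fin n) (Fin n) ℂ} {f f' : ℝ → ℝ}

theorem IsCP.posSemidef_map {β : Matrix (Fin n) (Fin n) ℂ →ₗ[ℂ] Matrix (Fin n) (Fin n) ℂ}
    (hβ : IsCP β) {x : Matrix (Fin n) (Fin n) ℂ} (hx : x.PosSemidef) : (β x).PosSemidef :=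
  (hβ 1 _ (hx.submatrix Prod.snd)).submatrix (Prod.mk 0)

theorem re_bregman_map_expectation (hT : IsSymmetricMarkovSemigroup T)
    (hE : IsFixedPointExpectation T E) (hρ : ρ.PosDef) {t : ℝ} (ht : 0 ≤ t) (f f' : ℝ → ℝ) :
    (bregman f f' (T t ρ) (E ρ)).re = (cfc f (T t ρ)).trace.re - (cfc f (E ρ)).trace.re := by
  have fixed : ∀ s, 0 ≤ s → T s (cfc f' (E ρ)) = cfc f' (E ρ) := fun s hs =>
    (hT.isDoublyStochasticMap hs).map_cfc_of_fixed (hT.expectation_posDef hE hρ).isHermitian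
      (hT.map_expectation hE hρ.isHermitian hs) f'
  have first_order := hT.re_trace_expectation_mul hE
    ((hT.isDoublyStochasticMap ht).posDef_map hρ).isHermitian fixed
  rw [hE.apply_map t ht] at first_order
  rw [bregman, trace_sub, trace_sub, sub_mul, trace_sub, Complex.sub_re, Complex.sub_re,
    Complex.sub_re, first_order, sub_self, sub_zero]

open scoped Matrix.Norms.L2Operator in
theorem hasDerivWithinAt_re_bregman (hT : IsSymmetricMarkovSemigroup T)
    (hE : IsFixedPointExpectation T E)
    (hgen : ∀ x t, 0 ≤ t → HasDerivWithinAt (fun s => T s x) (-A (T t x)) (Set.Ici 0) t)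
    (hf_conv : ConvexOn ℝ (Set.Ioi 0) f) (hf_deriv : ∀ u ∈ Set.Ioi 0, HasDerivAt f (f' u) u)
    (hf'_cont : ContinuousOn f' (Set.Ioi 0)) (hρ : ρ.PosDef) {t : ℝ} (ht : 0 ≤ t) :
    HasDerivWithinAt (fun s => (bregman f f' (T s ρ) (E ρ)).re) (-fisherInfo A f' (T t ρ))
      (Set.Ici 0) t := by
  have posDef {s : ℝ} (hs : 0 ≤ s) : (T s ρ).PosDef := (hT.isDoublyStochasticMap hs).posDef_map hρ
  have trace_deriv := (hasFDerivWithinAt_re_trace_cfc isOpen_Ioi hf_conv hf_deriv hf'_cont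
    (mem_hermitianWithSpectrumIn_Ioi (posDef ht))).comp_hasDerivWithinAt t (hgen ρ t ht)
    fun s hs => mem_hermitianWithSpectrumIn_Ioi (posDef hs)
  rw [map_neg, reTraceMul_apply] at trace_deriv
  exact (trace_deriv.sub_const _).congr_of_mem
    (fun s hs => re_bregman_map_expectation hT hE hρ hs f f') ht

theorem tendsto_re_bregman (hT : IsSymmetricMarkovSemigroup T) (hE : IsFixedPointExpectation T E)
    (hf : ContinuousOn f (Set.Ioi 0)) (hρ : ρ.PosDef) (f' : ℝ → ℝ) :
    Tendsto (fun t => (bregman f f' (T t ρ) (E ρ)).re) atTop (𝓝 0) := by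
  have posDef {s : ℝ} (hs : 0 ≤ s) : (T s ρ).PosDef := (hT.isDoublyStochasticMap hs).posDef_map hρ
  have orbit : Tendsto (fun t => T t ρ) atTop
      (𝓝[hermitianWithSpectrumIn (Fin n) (Set.Ioi 0)] E ρ) :=
    tendsto_nhdsWithin_iff.2 ⟨hT.tendsto_expectation hE hρ.isHermitian,
      (eventually_ge_atTop 0).mono fun t ht => mem_hermitianWithSpectrumIn_Ioi (posDef ht)⟩
  have cfc_tendsto : Tendsto (fun t => cfc f (T t ρ)) atTop (𝓝 (cfc f (E ρ))) :=
    (continuousOn_cfc_hermitianWithSpectrumIn isOpen_Ioi hf _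
      (mem_hermitianWithSpectrumIn_Ioi (hT.expectation_posDef hE hρ))).tendsto.comp orbit
  have trace_tendsto := ((reTraceMul 1).continuous.tendsto _).comp cfc_tendsto
  simp only [Function.comp_def, reTraceMul_apply, mul_one] at trace_tendsto
  refine (tendsto_sub_nhds_zero_iff.2 trace_tendsto).congr' ?_
  filter_upwards [eventually_ge_atTop 0] with t ht
    using (re_bregman_map_expectation hT hE hρ ht f f').symm

end EntropyProduction

theorem fisher_decay_implies_entropy_decay_general {n : ℕ}
    {T : ℝ → (Matrix (Fin n) (Fin n) ℂ →ₗ[ℂ] Matrix (Fin n) (Fin n) ℂ)}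
    {A E : Matrix (Fin n) (Fin n) ℂ →ₗ[ℂ] Matrix (Fin n) (Fin n) ℂ}
    (hT : IsSymmetricMarkovSemigroup T)
    (hgen : ∀ x t, 0 ≤ t → HasDerivWithinAt (fun s => T s x) (-A (T t x)) (Set.Ici 0) t)
    (hE : IsFixedPointExpectation T E) {f f' : ℝ → ℝ} (hf_conv : ConvexOn ℝ (Set.Ioi 0) f)
    (hf_deriv : ∀ u ∈ Set.Ioi 0, HasDerivAt f (f' u) u) (hf'_cont : ContinuousOn f' (Set.Ioi 0))
    {lam : ℝ}
    (hfisher : ∀ ρ : Matrix (Fin n) (Fin n) ℂ, ρ.PosDef → ∀ t, 0 ≤ t →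
      fisherInfo A f' (T t ρ) ≤ Real.exp (-lam * t) * fisherInfo A f' ρ) :
    (∀ ρ : Matrix (Fin n) (Fin n) ℂ, ρ.PosDef → ∀ t, 0 ≤ t →
      (bregman f f' (T t ρ) (E ρ)).re ≤ Real.exp (-lam * t) * (bregman f f' ρ (E ρ)).re) ∧
    (∀ ρ : Matrix (Fin n) (Fin n) ℂ, ρ.PosDef →
      lam * (bregman f f' ρ (E ρ)).re ≤ fisherInfo A f' ρ) := by
  have entropy_production {ρ : Matrix (Fin n) (Fin n) ℂ} (hρ : ρ.PosDef) {t : ℝ} (ht : 0 ≤ t) :=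
    hasDerivWithinAt_re_bregman hT hE hgen hf_conv hf_deriv hf'_cont hρ ht
  have decay : ∀ ρ : Matrix (Fin n) (Fin n) ℂ, ρ.PosDef → ∀ t, 0 ≤ t →
      (bregman f f' (T t ρ) (E ρ)).re ≤ Real.exp (-lam * t) * (bregman f f' ρ (E ρ)).re := by
    intro ρ hρ t ht
    have := le_mul_of_neg_deriv_shift_le (fun s hs => entropy_production hρ hs)
      (tendsto_re_bregman hT hE (hf_conv.continuousOn isOpen_Ioi) hρ f') ht fun s hs => by
        rw [hT.add_apply t s ht hs]
        exact hfisher _ ((hT.isDoublyStochasticMap hs).posDef_map hρ) t ht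
    rwa [hT.zero_eq_id] at this
  refine ⟨decay, fun ρ hρ => ?_⟩
  have := deriv_le_neg_mul_of_le_exp_neg_mul (lam := lam)
    (entropy_production hρ le_rfl) fun t ht => by
      simpa only [hT.zero_eq_id, LinearMap.id_apply] using decay ρ hρ t ht
  rw [hT.zero_eq_id, LinearMap.id_apply] at this
  linarith

/-- if a semigroup `T_t = e^{-tA}` of self-adjoint unital completely positive
maps with fixed-point conditional expectation `E` satisfies the exponential decay of the
`f`-Fisher information `I_A^f(T_t ρ) ≤ e^{-λt} I_A^f(ρ)`, then
`d^f(T_t ρ‖E ρ) ≤ e^{-λt} d^f(ρ‖E ρ)`; in particular `λ d^f(ρ‖E ρ) ≤ I_A^f(ρ)`. -/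
theorem fisher_decay_implies_entropy_decay {n : ℕ}
    (T : ℝ → (Matrix (Fin n) (Fin n) ℂ →ₗ[ℂ] Matrix (Fin n) (Fin n) ℂ))
    (A : Matrix (Fin n) (Fin n) ℂ →ₗ[ℂ] Matrix (Fin n) (Fin n) ℂ)
    (E : Matrix (Fin n) (Fin n) ℂ →ₗ[ℂ] Matrix (Fin n) (Fin n) ℂ)
    (hT0 : T 0 = LinearMap.id)
    (hTsem : ∀ s t : ℝ, 0 ≤ s → 0 ≤ t → ∀ x, T (s + t) x = T s (T t x))
    (hTcp : ∀ t : ℝ, 0 ≤ t → IsCP (T t))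
    (hTunital : ∀ t : ℝ, 0 ≤ t → T t 1 = 1)
    (hTsa : ∀ t : ℝ, 0 ≤ t → ∀ x y, (star (T t x) * y).trace = (star x * T t y).trace)
    (hgen : ∀ (x : Matrix (Fin n) (Fin n) ℂ) (t : ℝ), 0 ≤ t → ∀ i j,
      HasDerivAt (fun s : ℝ => (T s x) i j) (-(A (T t x)) i j) t)
    (hTE : ∀ t : ℝ, 0 ≤ t → ∀ x, T t (E x) = E x)
    (hET : ∀ t : ℝ, 0 ≤ t → ∀ x, E (T t x) = E x)
    (hEfix : ∀ x, (∀ t : ℝ, 0 ≤ t → T t x = x) → E x = x)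
    (f f' : ℝ → ℝ)
    (hf_pos : ∀ x ∈ Set.Ioi (0 : ℝ), 0 < f x)
    (hf_conv : ConvexOn ℝ (Set.Ioi 0) f)
    (hf_deriv : ∀ x ∈ Set.Ioi (0 : ℝ), HasDerivAt f (f' x) x)
    (hf'_cont : ContinuousOn f' (Set.Ioi 0))
    (lam : ℝ) (hlam : 0 < lam)
    (hfisher : ∀ (ρ : Matrix (Fin n) (Fin n) ℂ), ρ.PosDef → ∀ t : ℝ, 0 ≤ t →
      fisherInfo A f' (T t ρ) ≤ Real.exp (-lam * t) * fisherInfo A f' ρ) :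
    (∀ (ρ : Matrix (Fin n) (Fin n) ℂ), ρ.PosDef → ∀ t : ℝ, 0 ≤ t →
      (bregman f f' (T t ρ) (E ρ)).re ≤ Real.exp (-lam * t) * (bregman f f' ρ (E ρ)).re) ∧
    (∀ (ρ : Matrix (Fin n) (Fin n) ℂ), ρ.PosDef →
      lam * (bregman f f' ρ (E ρ)).re ≤ fisherInfo A f' ρ) :=
  fisher_decay_implies_entropy_decay_general
    ⟨hT0, hTsem, fun t ht _ hx => (hTcp t ht).posSemidef_map hx, hTunital, hTsa⟩
    (fun x t ht => hasDerivWithinAt_pi.2 fun i => hasDerivWithinAt_pi.2 fun j =>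
      (hgen x t ht i j).hasDerivWithinAt)
    ⟨hET, hEfix⟩ hf_conv hf_deriv hf'_cont hfisher
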